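/- (Main Theorem 2, transformation part.) Fix α,β,γ ∈ ℂ and let Ω ⊆ ℂ² be an open set of points (v₁,v₂) with v₁,v₂ ∉ {0,1} and v₁ ≠ v₂. Set P₁ := α/v₁ + β/(v₁−1) + γ/(v₁−v₂), P₂ := α/v₂ + β/(v₂−1) + γ/(v₂−v₁), F₁ := −γv₂(v₂−1)/(v₁(v₁−1)(v₁−v₂)), F₂ := −γv₁(v₁−1)/(v₂(v₂−1)(v₂−v₁)). Let g : Ω → ℂ be holomorphic and nonvanishing with ∂_{v₁}g = (α/(3v₁) + β/(3(v₁−1)) − 2γ/(3(v₁−v₂)))·g and ∂_{v₂}g = (α/(3v₂) + β/(3(v₂−1)) − 2γ/(3(v₂−v₁)))·g. Suppose the holomorphic function z : Ω → ℂ satisfies the three equations: ∂_{v₁v₁}z + (1/3)P₁∂_{v₁}z − F₁∂_{v₂}z + (∂_{v₂}F₁ − (1/3)∂_{v₁}P₁ − (2/9)P₁² − (2/3)F₁P₂)z = 0; ∂_{v₁v₂}z − (1/3)P₂∂_{v₁}z − (1/3)P₁∂_{v₂}z + ((1/3)∂_{v₁}P₂ + (1/3)∂_{v₂}P₁ + (1/9)P₁P₂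 − F₁F₂)z = 0; ∂_{v₂v₂}z + (1/3)P₂∂_{v₂}z − F₂∂_{v₁}z + (∂_{v₁}F₂ − (1/3)∂_{v₂}P₂ − (2/9)P₂² − (2/3)F₂P₁)z = 0. Then w := z/g satisfies: ∂_{v₁v₁}w + (α/v₁ + β/(v₁−1) − γ/(v₁−v₂))∂_{v₁}w + (γv₂(v₂−1)/(v₁(v₁−1)(v₁−v₂)))∂_{v₂}w + ((1−α−β)γ/(v₁(v₁−1)))w = 0; ∂_{v₂v₂}w + (α/v₂ + β/(v₂−1) − γ/(v₂−v₁))∂_{v₂}w + (γv₁(v₁−1)/(v₂(v₂−1)(v₂−v₁)))∂_{v₁}w + ((1−α−β)γ/(v₂(v₂−1)))w = 0; ∂_{v₁v₂}w = (−γ/(v₁−v₂))∂_{v₁}w + (γ/(v₁−v₂))∂_{v₂}w. -/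

import Mathlib

open Complex Matrix

noncomputable section

/-- Partial derivative in the first complex variable. -/
def pdx (f : ℂ × ℂ → ℂ) (p : ℂ × ℂ) : ℂ := deriv (fun x => f (x, p.2)) p.1

/-- Partial derivative in the second complex variable. -/
def pdy (f : ℂ × ℂ → ℂ) (p : ℂ × ℂ) : ℂ := deriv (fun y => f (p.1, y)) p.2

/-- The Jacobian `J(u₁,u₂) = ∂ₓu₁·∂ᵧu₂ − ∂ₓu₂·∂ᵧu₁`. -/
def Jac (u₁ u₂ : ℂ × ℂ → ℂ) (p : ℂ × ℂ) : ℂ :=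
  pdx u₁ p * pdy u₂ p - pdx u₂ p * pdy u₁ p

/-- The GL(3) derivative `{u₁,u₂;x,y}ₓ`. -/
def brX (u₁ u₂ : ℂ × ℂ → ℂ) (p : ℂ × ℂ) : ℂ :=
  (pdx u₁ p * pdx (pdx u₂) p - pdx u₂ p * pdx (pdx u₁) p) / Jac u₁ u₂ p

/-- The GL(3) derivative `{u₁,u₂;x,y}ᵧ`. -/
def brY (u₁ u₂ : ℂ × ℂ → ℂ) (p : ℂ × ℂ) : ℂ :=
  -(pdy u₁ p * pdy (pdy u₂) p - pdy u₂ p * pdy (pdy u₁) p) / Jac u₁ u₂ p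

/-- The GL(3) derivative `[u₁,u₂;x,y]ₓ`. -/
def sqX (u₁ u₂ : ℂ × ℂ → ℂ) (p : ℂ × ℂ) : ℂ :=
  ((pdy u₁ p * pdx (pdx u₂) p - pdy u₂ p * pdx (pdx u₁) p)
      + 2 * (pdx u₁ p * pdx (pdy u₂) p - pdx u₂ p * pdx (pdy u₁) p)) / Jac u₁ u₂ p

/-- The GL(3) derivative `[u₁,u₂;x,y]ᵧ`. -/
def sqY (u₁ u₂ : ℂ × ℂ → ℂ) (p : ℂ × ℂ) : ℂ :=
  -((pdx u₁ p * pdy (pdy u₂) p - pdx u₂ p * pdy (pdy u₁) p)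
      + 2 * (pdy u₁ p * pdx (pdy u₂) p - pdy u₂ p * pdx (pdy u₁) p)) / Jac u₁ u₂ p

/-- The coefficient `P₁(α,β,γ;v₁,v₂)`. -/
def P1 (α β γ : ℂ) (p : ℂ × ℂ) : ℂ := α / p.1 + β / (p.1 - 1) + γ / (p.1 - p.2)

/-- The coefficient `P₂(α,β,γ;v₁,v₂)`. -/
def P2 (α β γ : ℂ) (p : ℂ × ℂ) : ℂ := α / p.2 + β / (p.2 - 1) + γ / (p.2 - p.1)

/-- The coefficient `F₁(γ;v₁,v₂)`. -/
def F1 (γ : ℂ) (p : ℂ × ℂ) : ℂ :=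
  -γ * p.2 * (p.2 - 1) / (p.1 * (p.1 - 1) * (p.1 - p.2))

/-- The coefficient `F₂(γ;v₁,v₂)`. -/
def F2 (γ : ℂ) (p : ℂ × ℂ) : ℂ :=
  -γ * p.1 * (p.1 - 1) / (p.2 * (p.2 - 1) * (p.2 - p.1))

/-!
Write `e = γ / (v₁ - v₂)`. The logarithmic partial derivatives of `g` are `a = P₁ / 3 - e` and
`b = P₂ / 3 + e`, so substituting `z = g w` turns `∂_{v₁}` and `∂_{v₂}` into `∂_{v₁} + a` and
`∂_{v₂} + b`. All terms in which `P₁` and `P₂` enter quadratically cancel, and the new coefficients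
are read off from two rational identities: `F₁ F₂ = -e²` for the mixed equation, and
`∂_{v₂} F₁ - F₁ (P₂ + e) - ∂_{v₁} e - e P₁ + e² = (1 - α - β) γ / (v₁ (v₁ - 1))` for the first one.
The third equation is the first one after exchanging `v₁` and `v₂`.
-/

section UniformSlope

open Metric Filter Topology

variable {E : Type*} [NormedAddCommGroup E] [NormedSpace ℂ E] [CompleteSpace E]

theorem dist_dslope_deriv_le {f : ℂ → E} {c z : ℂ} {r M : ℝ}
    (hf : DifferentiableOn ℂ f (ball c r)) (hM : ∀ ζ ∈ ball c r, ‖f ζ‖ ≤ M) (hz : z ∈ ball c r) :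
    dist (dslope f c z) (deriv f c) ≤ 2 * (2 * M / r) / r * dist z c := by
  have hr : 0 < r := pos_of_mem_ball hz
  have hc : c ∈ ball c r := mem_ball_self hr
  have norm_dslope_le : ∀ ζ ∈ ball c r, ‖dslope f c ζ‖ ≤ 2 * M / r := fun ζ hζ => by
    refine Complex.norm_dslope_le_div_of_mapsTo_ball hf (fun ξ hξ => ?_) hζ
    rw [mem_closedBall, dist_eq_norm]
    linarith [norm_sub_le (f ξ) (f c), hM ξ hξ, hM c hc]
  rw [← dslope_same]
  refine Complex.dist_le_div_mul_dist_of_mapsTo_ball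
    ((Complex.differentiableOn_dslope (ball_mem_nhds c hr)).mpr hf) (fun ξ hξ => ?_) hz
  rw [mem_closedBall, dist_eq_norm]
  linarith [norm_sub_le (dslope f c ξ) (dslope f c c), norm_dslope_le ξ hξ, norm_dslope_le c hc]

theorem tendstoUniformlyOn_dslope {ι : Type*} {F : ι → ℂ → E} {s : Set ι} {c : ℂ} {r M : ℝ}
    (hr : 0 < r) (hF : ∀ i ∈ s, DifferentiableOn ℂ (F i) (ball c r))
    (hM : ∀ i ∈ s, ∀ z ∈ ball c r, ‖F i z‖ ≤ M) :
    TendstoUniformlyOn (fun z i => dslope (F i) c z) (fun i => deriv (F i) c) (𝓝 c) s := by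
  rw [Metric.tendstoUniformlyOn_iff]
  intro ε hε
  have hlim : Tendsto (fun z => 2 * (2 * M / r) / r * dist z c) (𝓝 c) (𝓝 0) := by
    have hcont : Continuous fun z => 2 * (2 * M / r) / r * dist z c := by fun_prop
    simpa using hcont.tendsto c
  filter_upwards [hlim.eventually_lt_const hε, ball_mem_nhds c hr] with z hzε hz i hi
  rw [dist_comm]
  exact (dist_dslope_deriv_le (hF i hi) (hM i hi) hz).trans_lt hzε

-- The derivative in `y` is a uniform limit of difference quotients, each holomorphic in `x`.
theorem differentiableAt_deriv_snd {Ω : Set (ℂ × ℂ)} (hΩ : IsOpen Ω) {f : ℂ × ℂ → E}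
    (hf : DifferentiableOn ℂ f Ω) {p : ℂ × ℂ} (hp : p ∈ Ω) :
    DifferentiableAt ℂ (fun x => deriv (fun y => f (x, y)) p.2) p.1 := by
  obtain ⟨r, hr, hball⟩ := nhds_basis_closedBall.mem_iff.mp (hΩ.mem_nhds hp)
  obtain ⟨M, hM⟩ := (isCompact_closedBall p r).exists_bound_of_continuousOn
    (hf.continuousOn.mono hball)
  have hmem : ∀ x ∈ ball p.1 r, ∀ y ∈ ball p.2 r, (x, y) ∈ closedBall p r := fun x hx y hy =>
    ball_subset_closedBall (ball_prod_same p.1 p.2 r ▸ ⟨hx, hy⟩)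
  have hfx : ∀ y ∈ ball p.2 r, DifferentiableOn ℂ (fun x => f (x, y)) (ball p.1 r) :=
    fun y hy => hf.comp (by fun_prop) fun x hx => hball (hmem x hx y hy)
  have hfy : ∀ x ∈ ball p.1 r, DifferentiableOn ℂ (fun y => f (x, y)) (ball p.2 r) :=
    fun x hx => hf.comp (by fun_prop) fun y hy => hball (hmem x hx y hy)
  have hlim : TendstoUniformlyOn (fun y x => dslope (fun y => f (x, y)) p.2 y)
      (fun x => deriv (fun y => f (x, y)) p.2) (𝓝[≠] p.2) (ball p.1 r) := fun v hv =>
    nhdsWithin_le_nhds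
      (tendstoUniformlyOn_dslope hr hfy (fun x hx y hy => hM _ (hmem x hx y hy)) v hv)
  refine (hlim.tendstoLocallyUniformlyOn.differentiableOn ?_ isOpen_ball).differentiableAt
    (ball_mem_nhds p.1 hr)
  filter_upwards [self_mem_nhdsWithin, nhdsWithin_le_nhds (ball_mem_nhds p.2 hr)] with y hne hy
  simp only [dslope_of_ne _ hne, slope_def_module]
  exact ((hfx y hy).sub (hfx p.2 (mem_ball_self hr))).const_smul (y - p.2)⁻¹

end UniformSlope

section PartialDerivatives

open Set

variable {f g : ℂ × ℂ → ℂ} {Ω : Set (ℂ × ℂ)} {p : ℂ × ℂ}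

theorem differentiableAt_slice_fst (hf : DifferentiableAt ℂ f p) :
    DifferentiableAt ℂ (fun x => f (x, p.2)) p.1 :=
  hf.comp p.1 (f := fun x => (x, p.2)) (by fun_prop)

theorem differentiableAt_pdx_slice_fst (hΩ : IsOpen Ω) (hf : DifferentiableOn ℂ f Ω)
    (hp : p ∈ Ω) : DifferentiableAt ℂ (fun x => pdx f (x, p.2)) p.1 := by
  have hU : IsOpen {x | (x, p.2) ∈ Ω} := hΩ.preimage (by fun_prop)
  have hslice : DifferentiableOn ℂ (fun x => f (x, p.2)) {x | (x, p.2) ∈ Ω} :=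
    hf.comp (by fun_prop) fun x hx => hx
  exact (hslice.deriv hU).differentiableAt (hU.mem_nhds hp)

theorem differentiableAt_pdy_slice_fst (hΩ : IsOpen Ω) (hf : DifferentiableOn ℂ f Ω)
    (hp : p ∈ Ω) : DifferentiableAt ℂ (fun x => pdy f (x, p.2)) p.1 :=
  differentiableAt_deriv_snd hΩ hf hp

theorem differentiableOn_comp_swap (hf : DifferentiableOn ℂ f Ω) :
    DifferentiableOn ℂ (f ∘ Prod.swap) (Prod.swap ⁻¹' Ω) :=
  hf.comp (differentiable_snd.prodMk differentiable_fst).differentiableOn fun _ hq => hq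

theorem pdx_congr (hΩ : IsOpen Ω) (h : EqOn f g Ω) (hp : p ∈ Ω) : pdx f p = pdx g p := by
  have hU : IsOpen {x | (x, p.2) ∈ Ω} := hΩ.preimage (by fun_prop)
  refine Filter.EventuallyEq.deriv_eq ?_
  filter_upwards [hU.mem_nhds hp] with x hx using h hx

theorem pdx_add (hf : DifferentiableAt ℂ (fun x => f (x, p.2)) p.1)
    (hg : DifferentiableAt ℂ (fun x => g (x, p.2)) p.1) :
    pdx (f + g) p = pdx f p + pdx g p :=
  (hf.hasDerivAt.add hg.hasDerivAt).deriv

theorem pdx_mul (hf : DifferentiableAt ℂ (fun x => f (x, p.2)) p.1)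
    (hg : DifferentiableAt ℂ (fun x => g (x, p.2)) p.1) :
    pdx (f * g) p = pdx f p * g p + f p * pdx g p :=
  (hf.hasDerivAt.mul hg.hasDerivAt).deriv

end PartialDerivatives

/-- The holomorphic function `g` on `Ω` has logarithmic partial derivatives `a` and `b`; it is the
factor by which unknowns are rescaled. Vanishing of `g` is not excluded. -/
structure HasLogPartials (a b : ℂ × ℂ → ℂ) (Ω : Set (ℂ × ℂ)) (g : ℂ × ℂ → ℂ) : Prop where
  differentiableOn : DifferentiableOn ℂ g Ω
  pdx_eq : ∀ p ∈ Ω, pdx g p = a p * g p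
  pdy_eq : ∀ p ∈ Ω, pdy g p = b p * g p

namespace HasLogPartials

open Set

variable {a b g u w z : ℂ × ℂ → ℂ} {Ω : Set (ℂ × ℂ)} {p : ℂ × ℂ}

theorem swap (h : HasLogPartials a b Ω g) :
    HasLogPartials (b ∘ Prod.swap) (a ∘ Prod.swap) (Prod.swap ⁻¹' Ω) (g ∘ Prod.swap) where
  differentiableOn := differentiableOn_comp_swap h.differentiableOn
  pdx_eq q hq := h.pdy_eq q.swap hq
  pdy_eq q hq := h.pdx_eq q.swap hq

theorem pdx_eqOn_of_slice (h : HasLogPartials a b Ω g) (hΩ : IsOpen Ω)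
    (hu : ∀ q ∈ Ω, DifferentiableAt ℂ (fun x => u (x, q.2)) q.1) (hz : EqOn z (g * u) Ω) :
    EqOn (pdx z) (g * (pdx u + a * u)) Ω := fun q hq => by
  have hgq := differentiableAt_slice_fst (h.differentiableOn.differentiableAt (hΩ.mem_nhds hq))
  rw [pdx_congr hΩ hz hq, pdx_mul hgq (hu q hq), h.pdx_eq q hq]
  simp only [Pi.mul_apply, Pi.add_apply]
  ring

theorem pdx_eqOn (h : HasLogPartials a b Ω g) (hΩ : IsOpen Ω) (hw : DifferentiableOn ℂ w Ω)
    (hz : EqOn z (g * w) Ω) : EqOn (pdx z) (g * (pdx w + a * w)) Ω :=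
  h.pdx_eqOn_of_slice hΩ
    (fun _ hq => differentiableAt_slice_fst (hw.differentiableAt (hΩ.mem_nhds hq))) hz

theorem pdy_eqOn (h : HasLogPartials a b Ω g) (hΩ : IsOpen Ω) (hw : DifferentiableOn ℂ w Ω)
    (hz : EqOn z (g * w) Ω) : EqOn (pdy z) (g * (pdy w + b * w)) Ω := fun q hq => by
  have hΩ' : IsOpen (Prod.swap ⁻¹' Ω) := hΩ.preimage continuous_swap
  exact h.swap.pdx_eqOn (w := w ∘ Prod.swap) (z := z ∘ Prod.swap) hΩ'
    (differentiableOn_comp_swap hw) (fun _ hr => hz hr) (x := q.swap) hq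

theorem pdx_pdx_eq (h : HasLogPartials a b Ω g) (hΩ : IsOpen Ω) (hw : DifferentiableOn ℂ w Ω)
    (hz : EqOn z (g * w) Ω) (ha : DifferentiableOn ℂ a Ω) (hp : p ∈ Ω) :
    pdx (pdx z) p =
      g p * (pdx (pdx w) p + 2 * a p * pdx w p + (pdx a p + a p ^ 2) * w p) := by
  have hw' : ∀ q ∈ Ω, DifferentiableAt ℂ (fun x => w (x, q.2)) q.1 := fun q hq =>
    differentiableAt_slice_fst (hw.differentiableAt (hΩ.mem_nhds hq))
  have ha' : ∀ q ∈ Ω, DifferentiableAt ℂ (fun x => a (x, q.2)) q.1 := fun q hq =>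
    differentiableAt_slice_fst (ha.differentiableAt (hΩ.mem_nhds hq))
  have hwx : ∀ q ∈ Ω, DifferentiableAt ℂ (fun x => pdx w (x, q.2)) q.1 := fun q hq =>
    differentiableAt_pdx_slice_fst hΩ hw hq
  rw [h.pdx_eqOn_of_slice hΩ (fun q hq => (hwx q hq).add ((ha' q hq).mul (hw' q hq)))
    (h.pdx_eqOn hΩ hw hz) hp]
  simp only [Pi.mul_apply, Pi.add_apply]
  rw [pdx_add (hwx p hp) ((ha' p hp).mul (hw' p hp)), pdx_mul (ha' p hp) (hw' p hp)]
  ring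

theorem pdx_pdy_eq (h : HasLogPartials a b Ω g) (hΩ : IsOpen Ω) (hw : DifferentiableOn ℂ w Ω)
    (hz : EqOn z (g * w) Ω) (hb : DifferentiableOn ℂ b Ω) (hp : p ∈ Ω) :
    pdx (pdy z) p =
      g p * (pdx (pdy w) p + b p * pdx w p + a p * pdy w p
        + (pdx b p + a p * b p) * w p) := by
  have hw' : ∀ q ∈ Ω, DifferentiableAt ℂ (fun x => w (x, q.2)) q.1 := fun q hq =>
    differentiableAt_slice_fst (hw.differentiableAt (hΩ.mem_nhds hq))
  have hb' : ∀ q ∈ Ω, DifferentiableAt ℂ (fun x => b (x, q.2)) q.1 := fun q hq =>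
    differentiableAt_slice_fst (hb.differentiableAt (hΩ.mem_nhds hq))
  have hwy : ∀ q ∈ Ω, DifferentiableAt ℂ (fun x => pdy w (x, q.2)) q.1 := fun q hq =>
    differentiableAt_pdy_slice_fst hΩ hw hq
  rw [h.pdx_eqOn_of_slice hΩ (fun q hq => (hwy q hq).add ((hb' q hq).mul (hw' q hq)))
    (h.pdy_eqOn hΩ hw hz) hp]
  simp only [Pi.mul_apply, Pi.add_apply]
  rw [pdx_add (hwy p hp) ((hb' p hp).mul (hw' p hp)), pdx_mul (hb' p hp) (hw' p hp)]
  ring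

end HasLogPartials

section Coefficients

variable {α β γ : ℂ} {p : ℂ × ℂ}

/-- The points of `ℂ²` off the lines `v₁ = 0`, `v₁ = 1`, `v₂ = 0`, `v₂ = 1` and `v₁ = v₂`, along
which the coefficients of the systems have their poles. -/
def regularPoints : Set (ℂ × ℂ) :=
  {p | p.1 ≠ 0 ∧ p.1 ≠ 1 ∧ p.2 ≠ 0 ∧ p.2 ≠ 1 ∧ p.1 ≠ p.2}

theorem swap_mem_regularPoints (hp : p ∈ regularPoints) : p.swap ∈ regularPoints :=
  let ⟨hx0, hx1, hy0, hy1, hxy⟩ := hp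
  ⟨hy0, hy1, hx0, hx1, hxy.symm⟩

/-- The pole term `e = γ / (v₁ - v₂)` of `P₁` along the diagonal. -/
def diagPole (γ : ℂ) (p : ℂ × ℂ) : ℂ := γ / (p.1 - p.2)

/-- The logarithmic `v₁`-derivative of the factor `g`. By symmetry its logarithmic `v₂`-derivative
is `gaugeCoeff α β γ ∘ Prod.swap`. -/
def gaugeCoeff (α β γ : ℂ) (p : ℂ × ℂ) : ℂ := P1 α β γ p / 3 - diagPole γ p

theorem diagPole_swap : diagPole γ p.swap = -diagPole γ p := by
  simp only [diagPole, Prod.fst_swap, Prod.snd_swap, ← neg_sub p.1 p.2, div_neg]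

theorem gaugeCoeff_eq :
    gaugeCoeff α β γ p =
      α / (3 * p.1) + β / (3 * (p.1 - 1)) - 2 * γ / (3 * (p.1 - p.2)) := by
  simp only [gaugeCoeff, P1, diagPole, div_mul_eq_div_div]
  ring

theorem gaugeCoeff_swap : gaugeCoeff α β γ p.swap = P2 α β γ p / 3 + diagPole γ p := by
  rw [gaugeCoeff, diagPole_swap, sub_neg_eq_add]
  rfl

theorem differentiableAt_P1 (hp : p ∈ regularPoints) : DifferentiableAt ℂ (P1 α β γ) p := by
  obtain ⟨hx0, hx1, -, -, hxy⟩ := hp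
  have hx1' := sub_ne_zero.mpr hx1
  have hxy' := sub_ne_zero.mpr hxy
  unfold P1
  fun_prop (disch := assumption)

theorem differentiableAt_diagPole (hp : p.1 ≠ p.2) : DifferentiableAt ℂ (diagPole γ) p := by
  have hxy := sub_ne_zero.mpr hp
  unfold diagPole
  fun_prop (disch := assumption)

theorem differentiableAt_gaugeCoeff (hp : p ∈ regularPoints) :
    DifferentiableAt ℂ (gaugeCoeff α β γ) p := by
  have hP1 : DifferentiableAt ℂ (P1 α β γ) p := differentiableAt_P1 hp
  have he : DifferentiableAt ℂ (diagPole γ) p := differentiableAt_diagPole hp.2.2.2.2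
  unfold gaugeCoeff
  fun_prop

theorem pdx_diagPole (hp : p.1 ≠ p.2) : pdx (diagPole γ) p = -γ / (p.1 - p.2) ^ 2 :=
  (((hasDerivAt_const p.1 γ).fun_div ((hasDerivAt_id p.1).sub_const p.2)
    (sub_ne_zero.mpr hp)).congr_deriv (by simp)).deriv

theorem pdx_P2_eq_neg_pdx_diagPole (hp : p.1 ≠ p.2) : pdx (P2 α β γ) p = -pdx (diagPole γ) p := by
  have hP2 : P2 α β γ = fun q => α / q.2 + β / (q.2 - 1) - diagPole γ q := by
    funext q
    rw [sub_eq_add_neg, ← diagPole_swap]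
    rfl
  rw [hP2]
  exact ((differentiableAt_slice_fst (differentiableAt_diagPole hp)).hasDerivAt.const_sub
    (α / p.2 + β / (p.2 - 1))).deriv

theorem pdy_P1_eq_neg_pdx_diagPole (hp : p.1 ≠ p.2) : pdy (P1 α β γ) p = -pdx (diagPole γ) p :=
  calc pdy (P1 α β γ) p = pdx (P2 α β γ) p.swap := rfl
    _ = -pdx (diagPole γ) p.swap := pdx_P2_eq_neg_pdx_diagPole hp.symm
    _ = -pdx (diagPole γ) p := by
      rw [pdx_diagPole hp, pdx_diagPole hp.symm, Prod.fst_swap, Prod.snd_swap, sub_sq_comm]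

theorem pdx_gaugeCoeff (hp : p ∈ regularPoints) :
    pdx (gaugeCoeff α β γ) p = pdx (P1 α β γ) p / 3 - pdx (diagPole γ) p :=
  (((differentiableAt_slice_fst (differentiableAt_P1 hp)).hasDerivAt.div_const 3).sub
    (differentiableAt_slice_fst (differentiableAt_diagPole hp.2.2.2.2)).hasDerivAt).deriv

theorem pdx_gaugeCoeff_comp_swap (hp : p ∈ regularPoints) :
    pdx (gaugeCoeff α β γ ∘ Prod.swap) p = pdx (P2 α β γ) p / 3 + pdx (diagPole γ) p := by
  have hP2 : DifferentiableAt ℂ (P2 α β γ) p :=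
    (differentiableAt_P1 (swap_mem_regularPoints hp)).comp p
      (differentiable_snd.prodMk differentiable_fst p)
  have hcoeff : gaugeCoeff α β γ ∘ Prod.swap = fun q => P2 α β γ q / 3 + diagPole γ q :=
    funext fun _ => gaugeCoeff_swap
  rw [hcoeff]
  exact (((differentiableAt_slice_fst hP2).hasDerivAt.div_const 3).add
    (differentiableAt_slice_fst (differentiableAt_diagPole hp.2.2.2.2)).hasDerivAt).deriv

theorem pdy_F1 (hp : p ∈ regularPoints) :
    pdy (F1 γ) p = -γ / (p.1 * (p.1 - 1))
      * ((2 * p.2 - 1) / (p.1 - p.2) + p.2 * (p.2 - 1) / (p.1 - p.2) ^ 2) := by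
  obtain ⟨hx0, hx1, -, -, hxy⟩ := hp
  have hx1' := sub_ne_zero.mpr hx1
  have hxy' := sub_ne_zero.mpr hxy
  have hnum := ((hasDerivAt_id p.2).const_mul (-γ)).fun_mul ((hasDerivAt_id p.2).sub_const 1)
  have hden := ((hasDerivAt_id p.2).const_sub p.1).const_mul (p.1 * (p.1 - 1))
  refine (hnum.fun_div hden (mul_ne_zero (mul_ne_zero hx0 hx1') hxy')).deriv.trans ?_
  simp only [id]
  field_simp
  ring

theorem F1_mul_F2 (hp : p ∈ regularPoints) : F1 γ p * F2 γ p = -diagPole γ p ^ 2 := by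
  obtain ⟨hx0, hx1, hy0, hy1, hxy⟩ := hp
  have hx1' := sub_ne_zero.mpr hx1
  have hy1' := sub_ne_zero.mpr hy1
  have hxy' := sub_ne_zero.mpr hxy
  rw [F1, F2, diagPole, ← neg_sub p.1 p.2]
  field_simp

theorem zerothOrderCoeff_eq (hp : p ∈ regularPoints) :
    pdy (F1 γ) p - F1 γ p * (P2 α β γ p + diagPole γ p) - pdx (diagPole γ) p
        - diagPole γ p * P1 α β γ p + diagPole γ p ^ 2 =
      (1 - α - β) * γ / (p.1 * (p.1 - 1)) := by
  rw [pdy_F1 hp, pdx_diagPole hp.2.2.2.2]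
  obtain ⟨hx0, hx1, hy0, hy1, hxy⟩ := hp
  have hx1' := sub_ne_zero.mpr hx1
  have hy1' := sub_ne_zero.mpr hy1
  have hxy' := sub_ne_zero.mpr hxy
  rw [F1, P1, P2, diagPole, ← neg_sub p.1 p.2]
  field_simp
  ring

end Coefficients

/-- The left-hand side of the `∂_{v₁v₁}`-equation of the system for `z`. The `∂_{v₂v₂}`-equation is
obtained from it by exchanging `v₁` and `v₂`. -/
def normalXX (α β γ : ℂ) (z : ℂ × ℂ → ℂ) (p : ℂ × ℂ) : ℂ :=
  pdx (pdx z) p + (1 / 3) * P1 α β γ p * pdx z p - F1 γ p * pdy z p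
    + (pdy (F1 γ) p - (1 / 3) * pdx (P1 α β γ) p - (2 / 9) * P1 α β γ p ^ 2
        - (2 / 3) * F1 γ p * P2 α β γ p) * z p

/-- The left-hand side of the `∂_{v₁v₂}`-equation of the system for `z`. -/
def normalXY (α β γ : ℂ) (z : ℂ × ℂ → ℂ) (p : ℂ × ℂ) : ℂ :=
  pdx (pdy z) p - (1 / 3) * P2 α β γ p * pdx z p - (1 / 3) * P1 α β γ p * pdy z p
    + ((1 / 3) * pdx (P2 α β γ) p + (1 / 3) * pdy (P1 α β γ) p
        + (1 / 9) * P1 α β γ p * P2 α β γ p - F1 γ p * F2 γ p) * z p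

/-- The left-hand side of the `∂_{v₁v₁}`-equation of the Appell-type system for `w`. The
`∂_{v₂v₂}`-equation is obtained from it by exchanging `v₁` and `v₂`. -/
def appellXX (α β γ : ℂ) (w : ℂ × ℂ → ℂ) (p : ℂ × ℂ) : ℂ :=
  pdx (pdx w) p
    + (α / p.1 + β / (p.1 - 1) - γ / (p.1 - p.2)) * pdx w p
    + (γ * p.2 * (p.2 - 1) / (p.1 * (p.1 - 1) * (p.1 - p.2))) * pdy w p
    + ((1 - α - β) * γ / (p.1 * (p.1 - 1))) * w p

/-- The difference of the two sides of the `∂_{v₁v₂}`-equation of the Appell-type system for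
`w`. -/
def appellXY (γ : ℂ) (w : ℂ × ℂ → ℂ) (p : ℂ × ℂ) : ℂ :=
  pdx (pdy w) p - ((-γ / (p.1 - p.2)) * pdx w p + (γ / (p.1 - p.2)) * pdy w p)

section Transformation

open Set

variable {α β γ : ℂ} {g w z : ℂ × ℂ → ℂ} {Ω : Set (ℂ × ℂ)} {p : ℂ × ℂ}

theorem normalXX_eq_mul_appellXX (hΩ : IsOpen Ω) (hreg : Ω ⊆ regularPoints)
    (hg : HasLogPartials (gaugeCoeff α β γ) (gaugeCoeff α β γ ∘ Prod.swap) Ω g)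
    (hw : DifferentiableOn ℂ w Ω) (hz : EqOn z (g * w) Ω) (hp : p ∈ Ω) :
    normalXX α β γ z p = g p * appellXX α β γ w p := by
  have ha : DifferentiableOn ℂ (gaugeCoeff α β γ) Ω := fun q hq =>
    (differentiableAt_gaugeCoeff (hreg hq)).differentiableWithinAt
  have hP1 : α / p.1 + β / (p.1 - 1) - γ / (p.1 - p.2) = P1 α β γ p - 2 * diagPole γ p := by
    rw [P1, diagPole]
    ring
  have hF1 : γ * p.2 * (p.2 - 1) / (p.1 * (p.1 - 1) * (p.1 - p.2)) = -F1 γ p := by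
    rw [F1]
    ring
  rw [normalXX, appellXX, hg.pdx_pdx_eq hΩ hw hz ha hp, hg.pdx_eqOn hΩ hw hz hp,
    hg.pdy_eqOn hΩ hw hz hp, hz hp, hP1, hF1, ← zerothOrderCoeff_eq (hreg hp),
    pdx_gaugeCoeff (hreg hp)]
  simp only [Pi.mul_apply, Pi.add_apply, Function.comp_apply, gaugeCoeff_swap]
  rw [gaugeCoeff]
  ring

theorem normalXY_eq_mul_appellXY (hΩ : IsOpen Ω) (hreg : Ω ⊆ regularPoints)
    (hg : HasLogPartials (gaugeCoeff α β γ) (gaugeCoeff α β γ ∘ Prod.swap) Ω g)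
    (hw : DifferentiableOn ℂ w Ω) (hz : EqOn z (g * w) Ω) (hp : p ∈ Ω) :
    normalXY α β γ z p = g p * appellXY γ w p := by
  have hb : DifferentiableOn ℂ (gaugeCoeff α β γ ∘ Prod.swap) Ω :=
    (differentiableOn_comp_swap fun q hq =>
      (differentiableAt_gaugeCoeff hq).differentiableWithinAt).mono
      fun q hq => swap_mem_regularPoints (hreg hq)
  have hxy : p.1 ≠ p.2 := (hreg hp).2.2.2.2
  have he : γ / (p.1 - p.2) = diagPole γ p := rfl
  have hne : -γ / (p.1 - p.2) = -diagPole γ p := neg_div _ _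
  rw [normalXY, appellXY, hg.pdx_pdy_eq hΩ hw hz hb hp, hg.pdx_eqOn hΩ hw hz hp,
    hg.pdy_eqOn hΩ hw hz hp, hz hp, F1_mul_F2 (hreg hp), pdx_gaugeCoeff_comp_swap (hreg hp),
    pdx_P2_eq_neg_pdx_diagPole hxy, pdy_P1_eq_neg_pdx_diagPole hxy, he, hne]
  simp only [Pi.mul_apply, Pi.add_apply, Function.comp_apply, gaugeCoeff_swap]
  rw [gaugeCoeff]
  ring

end Transformation

/-- **Main Theorem 2, transformation part.** Dividing a solution `z` of
the linear system by the multivalued factor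
`g = v₁^{α/3}v₂^{α/3}(v₁−1)^{β/3}(v₂−1)^{β/3}(v₁−v₂)^{−2γ/3}`
(characterized by its logarithmic derivatives) yields a solution `w = z/g` of the
Appell-type hypergeometric system. Here `pdx`/`pdy` denote `∂_{v₁}`/`∂_{v₂}`. -/
theorem statement11 (α β γ : ℂ) (Ω : Set (ℂ × ℂ)) (hΩ : IsOpen Ω)
    (hΩgood : ∀ p ∈ Ω, p.1 ≠ 0 ∧ p.1 ≠ 1 ∧ p.2 ≠ 0 ∧ p.2 ≠ 1 ∧ p.1 ≠ p.2)
    (g : ℂ × ℂ → ℂ) (hg : DifferentiableOn ℂ g Ω) (hg0 : ∀ p ∈ Ω, g p ≠ 0)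
    (hgx : ∀ p ∈ Ω, pdx g p =
      (α / (3 * p.1) + β / (3 * (p.1 - 1)) - 2 * γ / (3 * (p.1 - p.2))) * g p)
    (hgy : ∀ p ∈ Ω, pdy g p =
      (α / (3 * p.2) + β / (3 * (p.2 - 1)) - 2 * γ / (3 * (p.2 - p.1))) * g p)
    (z : ℂ × ℂ → ℂ) (hz : DifferentiableOn ℂ z Ω)
    (heq₁ : ∀ p ∈ Ω,
      pdx (pdx z) p + (1/3) * P1 α β γ p * pdx z p - F1 γ p * pdy z p
        + (pdy (F1 γ) p - (1/3) * pdx (P1 α β γ) p - (2/9) * P1 α β γ p ^ 2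
            - (2/3) * F1 γ p * P2 α β γ p) * z p = 0)
    (heq₂ : ∀ p ∈ Ω,
      pdx (pdy z) p - (1/3) * P2 α β γ p * pdx z p - (1/3) * P1 α β γ p * pdy z p
        + ((1/3) * pdx (P2 α β γ) p + (1/3) * pdy (P1 α β γ) p
            + (1/9) * P1 α β γ p * P2 α β γ p - F1 γ p * F2 γ p) * z p = 0)
    (heq₃ : ∀ p ∈ Ω,
      pdy (pdy z) p + (1/3) * P2 α β γ p * pdy z p - F2 γ p * pdx z p
        + (pdx (F2 γ) p - (1/3) * pdy (P2 α β γ) p - (2/9) * P2 α β γ p ^ 2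
            - (2/3) * F2 γ p * P1 α β γ p) * z p = 0)
    (w : ℂ × ℂ → ℂ) (hw : w = fun q => z q / g q) :
    ∀ p ∈ Ω,
      (pdx (pdx w) p
        + (α / p.1 + β / (p.1 - 1) - γ / (p.1 - p.2)) * pdx w p
        + (γ * p.2 * (p.2 - 1) / (p.1 * (p.1 - 1) * (p.1 - p.2))) * pdy w p
        + ((1 - α - β) * γ / (p.1 * (p.1 - 1))) * w p = 0) ∧
      (pdy (pdy w) p
        + (α / p.2 + β / (p.2 - 1) - γ / (p.2 - p.1)) * pdy w p
        + (γ * p.1 * (p.1 - 1) / (p.2 * (p.2 - 1) * (p.2 - p.1))) * pdx w p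
        + ((1 - α - β) * γ / (p.2 * (p.2 - 1))) * w p = 0) ∧
      (pdx (pdy w) p =
        (-γ / (p.1 - p.2)) * pdx w p + (γ / (p.1 - p.2)) * pdy w p) := by
  subst hw
  have hreg : Ω ⊆ regularPoints := hΩgood
  have hgauge : HasLogPartials (gaugeCoeff α β γ) (gaugeCoeff α β γ ∘ Prod.swap) Ω g :=
    ⟨hg, fun p hp => gaugeCoeff_eq ▸ hgx p hp,
      fun p hp => (hgy p hp).trans (congrArg (· * g p) (gaugeCoeff_eq (p := p.swap)).symm)⟩
  have hw : DifferentiableOn ℂ (fun q => z q / g q) Ω := by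
    simpa only [div_eq_mul_inv] using hz.fun_mul (hg.fun_inv hg0)
  have hzw : Set.EqOn z (g * fun q => z q / g q) Ω := fun q hq =>
    (mul_div_cancel₀ (z q) (hg0 q hq)).symm
  intro p hp
  have hXX := normalXX_eq_mul_appellXX hΩ hreg hgauge hw hzw hp
  have hXY := normalXY_eq_mul_appellXY hΩ hreg hgauge hw hzw hp
  have hYY := normalXX_eq_mul_appellXX (z := z ∘ Prod.swap) (p := p.swap)
    (hΩ.preimage continuous_swap) (fun q hq => swap_mem_regularPoints (hreg hq)) hgauge.swap
    (differentiableOn_comp_swap hw) (fun q hq => hzw hq) hp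
  exact ⟨(mul_eq_zero.mp (hXX.symm.trans (heq₁ p hp))).resolve_left (hg0 p hp),
    (mul_eq_zero.mp (hYY.symm.trans (heq₃ p hp))).resolve_left (hg0 p hp),
    sub_eq_zero.mp
      ((mul_eq_zero.mp (hXY.symm.trans (heq₂ p hp))).resolve_left (hg0 p hp))⟩
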